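/- Let Ω ⊆ [0,1]ᵐ be a convex set such that for every choice of signs J ∈ {0,1}ᵐ, Ω has nonempty intersection with the subcube D_J = {x ∈ [0,1]ᵐ : x_i ≤ 1/2 if J_i = 0 and x_i ≥ 1/2 if J_i = 1 for all i}. Then the center point (1/2, 1/2, …, 1/2) belongs to Ω (or, if Ω is not closed, to its closure). -/

import Mathlib

theorem stmt_13 (m : ℕ) (Ω : Set (Fin m → ℝ)) (hconv : Convex ℝ Ω)
    (hsub : Ω ⊆ Set.Icc (0 : Fin m → ℝ) 1)
    (hmeet : ∀ J : Fin m → Bool,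
      (Ω ∩ {x : Fin m → ℝ | ∀ i, if J i then 1/2 ≤ x i else x i ≤ 1/2}).Nonempty) :
    (fun _ => (1/2 : ℝ)) ∈ closure Ω := by
  have key : ∀ S : Finset (Fin m), ∀ J : Fin m → Bool, ∃ x ∈ Ω, (∀ i ∈ S, x i = 1/2) ∧
      ∀ i, i ∉ S → if J i then 1/2 ≤ x i else x i ≤ 1/2 := by
    intro S
    induction S using Finset.induction_on with
    | empty =>
      intro J
      obtain ⟨x, hx, h⟩ := hmeet J
      exact ⟨x, hx, by simp, fun i _ => h i⟩
    | insert a S ha ih =>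
      intro J
      obtain ⟨x, hx, hxS, hxJ⟩ := ih (Function.update J a false)
      obtain ⟨y, hy, hyS, hyJ⟩ := ih (Function.update J a true)
      have h1 : x a ≤ 1/2 := by simpa using hxJ a ha
      have h2 : 1/2 ≤ y a := by simpa using hyJ a ha
      have h3 : (1/2 : ℝ) ∈ segment ℝ (x a) (y a) := by
        rw [segment_eq_Icc (h1.trans h2)]
        exact ⟨h1, h2⟩
      obtain ⟨s, t, hs, ht, hst, h⟩ := h3
      refine ⟨s • x + t • y, hconv hx hy hs ht hst, ?_, ?_⟩
      · intro i hi
        rcases Finset.mem_insert.1 hi with rfl | hi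
        · simpa using h
        · simp only [Pi.add_apply, Pi.smul_apply, smul_eq_mul, hxS i hi, hyS i hi]
          rw [← add_mul, hst, one_mul]
      · intro i hi
        rw [Finset.mem_insert, not_or] at hi
        have hxi := hxJ i hi.2
        have hyi := hyJ i hi.2
        rw [Function.update_of_ne hi.1] at hxi hyi
        simp only [Pi.add_apply, Pi.smul_apply, smul_eq_mul]
        split_ifs at hxi hyi ⊢
        · nlinarith [mul_le_mul_of_nonneg_left hxi hs, mul_le_mul_of_nonneg_left hyi ht]
        · nlinarith [mul_le_mul_of_nonneg_left hxi hs, mul_le_mul_of_nonneg_left hyi ht]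
  obtain ⟨x, hx, h, -⟩ := key Finset.univ (fun _ => true)
  have hxe : x = fun _ => (1/2 : ℝ) := funext fun i => h i (Finset.mem_univ i)
  exact subset_closure (hxe ▸ hx)
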